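/- arXiv:1411.4058 — 2 statements merged into one kernel-verified Lean document; each statement's English description precedes it below -/
import Mathlib

section
/- For integers k > ℓ ≥ 1 and positive integers e_1,...,e_t, with i = i(k,ℓ), the ordered Ramsey number satisfies OR(P_{e_1}^{k,ℓ},...,P_{e_t}^{k,ℓ}) = (k−ℓ)·|Q_{i}(e_1,...,e_t)| + ℓ − (k−ℓ)(i−2). -/
/-- An ordered hypergraph with vertex set `{1, …, n}` (with its natural order)
and edges given as finite sets of vertices. -/
structure OrderedHypergraph where
  n : ℕ
  edges : Finset (Finset ℕ)

/-- An ordered hypergraph `G` is contained in an ordered hypergraph `H` if there is an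
injective, order-preserving map from the vertices of `G` to the vertices of `H` such that
edges of `G` map to edges of `H`. -/
def OrderedHypergraph.Contains (H G : OrderedHypergraph) : Prop :=
  ∃ f : ℕ → ℕ, StrictMono f ∧ (∀ v ∈ Finset.Icc 1 G.n, f v ∈ Finset.Icc 1 H.n) ∧
    ∀ A ∈ G.edges, A.image f ∈ H.edges

/-- The complete `k`-uniform ordered hypergraph `K_N^k` on the vertex set `{1, …, N}`. -/
def completeHG (k N : ℕ) : OrderedHypergraph :=
  ⟨N, Finset.powersetCard k (Finset.Icc 1 N)⟩

/-- The `i`-colored subgraph of `K_N^k` under the coloring `c`. -/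
def coloredSubgraph (k N : ℕ) {t : ℕ} (c : Finset ℕ → Fin t) (i : Fin t) : OrderedHypergraph :=
  ⟨N, (Finset.powersetCard k (Finset.Icc 1 N)).filter fun A => c A = i⟩

/-- The ordered Ramsey number `OR(G 0, …, G (t-1))` of `k`-uniform ordered hypergraphs:
the minimum `N` such that every `t`-coloring of the edges of `K_N^k` contains, for some
color `i`, a copy of `G i` in the `i`-colored subgraph. -/
noncomputable def ORnum (k : ℕ) {t : ℕ} (G : Fin t → OrderedHypergraph) : ℕ :=
  sInf {N | ∀ c : Finset ℕ → Fin t, ∃ i, (coloredSubgraph k N c i).Contains (G i)}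

/-- The `(k,ℓ)`-path `P_e^{k,ℓ}` with `e` edges: the ordered `k`-uniform hypergraph on
vertex set `{1, …, e(k-ℓ)+ℓ}` with edges `A_r = {(r-1)(k-ℓ)+1, …, (r-1)(k-ℓ)+k}`. -/
def loosePath (k l e : ℕ) : OrderedHypergraph :=
  ⟨e * (k - l) + l,
    (Finset.range e).image fun r => Finset.Icc (r * (k - l) + 1) (r * (k - l) + k)⟩


/-- The posets `Q_m(e_1, …, e_t)` (bundled with their partial orders), indexed so that
`QPoset t e m` is `Q_{m+1}(e_1, …, e_t)`:  `Q_1` is the disjoint union of `t` chains of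
sizes `e_1 - 1, …, e_t - 1` (elements of distinct chains incomparable, which is exactly
the componentwise order on the sigma type), and `Q_{m+1} = J(Q_m)` is the poset of
down-sets (lower sets) of `Q_m`, ordered by inclusion. -/
def QPoset (t : ℕ) (e : Fin t → ℕ) : ℕ → (α : Type) × PartialOrder α
  | 0 => ⟨(j : Fin t) × Fin (e j - 1), inferInstance⟩
  | m + 1 =>
      letI := (QPoset t e m).2
      ⟨LowerSet (QPoset t e m).1, inferInstance⟩

/-- Valid tuples: strictly increasing lists of length `m` with entries below `N`. -/
def VTup (N m : ℕ) (x : List ℕ) : Prop :=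
  x.length = m ∧ x.IsChain (· < ·) ∧ ∀ a ∈ x, a < N

/-- There is a map from `m`-tuples to `P` with no descent along consecutive tuples. -/
def ELab (N m : ℕ) (P : Type) [PartialOrder P] : Prop :=
  ∃ φ : (x : List ℕ) → VTup N m x → P, ∀ a y b (h1 : VTup N m (a :: y))
    (h2 : VTup N m (y ++ [b])), VTup N (m + 1) (a :: (y ++ [b])) →
      ¬ φ (y ++ [b]) h2 ≤ φ (a :: y) h1

theorem VTup.left {N m : ℕ} {a b : ℕ} {y : List ℕ} (h : VTup N (m + 1) (a :: (y ++ [b]))) :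
    VTup N m (a :: y) := by
  obtain ⟨h1, h2, h3⟩ := h
  refine ⟨by simpa using h1, ?_, fun c hc => h3 c ?_⟩
  · rw [← List.cons_append] at h2
    exact h2.left_of_append
  · simp at hc ⊢; tauto

theorem VTup.right {N m : ℕ} {a b : ℕ} {y : List ℕ} (h : VTup N (m + 1) (a :: (y ++ [b]))) :
    VTup N m (y ++ [b]) := by
  obtain ⟨h1, h2, h3⟩ := h
  refine ⟨by simpa using h1, h2.tail, fun c hc => h3 c ?_⟩
  exact List.mem_cons_of_mem _ hc

theorem VTup.exists_rep {N m : ℕ} {x : List ℕ} (h : VTup N (m + 2) x) :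
    ∃ a y b, x = a :: (y ++ [b]) := by
  obtain ⟨h1, h2, h3⟩ := h
  match x, h1 with
  | a :: x', h1 =>
    have hne : x' ≠ [] := by
      rintro rfl
      simp at h1
    exact ⟨a, x'.dropLast, x'.getLast hne, by rw [List.dropLast_append_getLast]⟩

theorem ELab_step (N m : ℕ) (P : Type) [PartialOrder P] :
    ELab N (m + 2) P ↔ ELab N (m + 1) (LowerSet P) := by
  constructor
  · rintro ⟨φ, hφ⟩
    refine ⟨fun y _ => ⟨{p | ∃ z, ∃ h : VTup N (m + 2) (z :: y), p ≤ φ (z :: y) h}, ?_⟩, ?_⟩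
    · rintro p q hqp ⟨z, h, hz⟩
      exact ⟨z, h, le_trans hqp hz⟩
    · intro a y b h1 h2 h3 hle
      have hm : φ (a :: (y ++ [b])) h3 ∈
          {p | ∃ z, ∃ h : VTup N (m + 2) (z :: a :: y), p ≤ φ (z :: a :: y) h} :=
        hle ⟨a, h3, le_rfl⟩
      obtain ⟨z, h, hz⟩ := hm
      refine hφ z (a :: y) b h h3 ?_ hz
      obtain ⟨g1, g2, g3⟩ := h
      obtain ⟨k1, k2, k3⟩ := h3
      refine ⟨by simpa using k1, ?_, ?_⟩
      · rw [List.cons_append, List.isChain_cons_cons]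
        exact ⟨(List.isChain_cons_cons.1 g2).1, k2⟩
      · intro c hc
        rcases List.mem_cons.1 hc with rfl | hc
        · exact g3 _ (by simp)
        · exact k3 c hc
  · rintro ⟨ψ, hψ⟩
    have key : ∀ x : List ℕ, ∀ h : VTup N (m + 2) x, ∃ p : P, ∀ a y b,
        ∀ e : x = a :: (y ++ [b]),
          p ∈ ψ (y ++ [b]) (VTup.right (e ▸ h)) ∧ p ∉ ψ (a :: y) (VTup.left (e ▸ h)) := by
      intro x h
      obtain ⟨a, y, b, rfl⟩ := h.exists_rep
      have := hψ a y b h.left h.right h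
      obtain ⟨p, hp1, hp2⟩ := Set.not_subset.1 this
      refine ⟨p, ?_⟩
      intro a' y' b' e
      have e1 := (List.cons.inj e).1
      have e2 := List.append_inj' (List.cons.inj e).2 rfl
      have e3 := e2.1
      have e4 := (List.cons.inj e2.2).1
      subst e1 e3 e4
      exact ⟨hp1, hp2⟩
    choose φ hφ using key
    refine ⟨φ, ?_⟩
    intro a y b h1 h2 h3 hle
    obtain ⟨a', w, b', e⟩ := h3.exists_rep
    obtain ⟨c, u, d, e1⟩ := h1.exists_rep
    simp only [List.cons.injEq] at e1
    obtain ⟨rfl, rfl⟩ := e1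
    have f1 := (hφ _ h1 _ _ _ rfl).1
    match u, h1, h2, h3, hle, f1 with
    | [], h1, h2, h3, hle, f1 =>
      exact (hφ _ h2 d [] b rfl).2 ((ψ _ _).lower hle f1)
    | v :: u, h1, h2, h3, hle, f1 =>
      exact (hφ _ h2 v (u ++ [d]) b rfl).2 ((ψ _ _).lower hle f1)

theorem ELab_one (N : ℕ) (P : Type) [PartialOrder P] [Finite P] :
    ELab N 1 P ↔ N ≤ Nat.card P := by
  have hv : ∀ n, n < N → VTup N 1 [n] := fun n hn => ⟨rfl, by simp, by simpa using hn⟩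
  constructor
  · rintro ⟨φ, hφ⟩
    have hlt : ∀ a b : Fin N, a < b → φ [b.1] (hv _ b.2) ≠ φ [a.1] (hv _ a.2) := by
      intro a b hab h
      refine hφ a.1 [] b.1 (hv _ a.2) (hv _ b.2) ⟨rfl, by simpa using hab, ?_⟩ h.le
      simp
    have hinj : Function.Injective (fun n : Fin N => φ [n.1] (hv _ n.2)) := by
      intro a b hab
      rcases lt_trichotomy a b with h | h | h
      · exact absurd hab.symm (hlt _ _ h)
      · exact h
      · exact absurd hab (hlt _ _ h)
    simpa using Nat.card_le_card_of_injective _ hinj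
  · intro hN
    have : Finite (LinearExtension P) := ‹Finite P›
    have : Fintype (LinearExtension P) := Fintype.ofFinite _
    have hc : Fintype.card (LinearExtension P) = Nat.card P := by
      rw [← Nat.card_eq_fintype_card]; rfl
    let g := Fintype.orderIsoFinOfCardEq (LinearExtension P) hc
    have hlt : ∀ x, VTup N 1 x → x.headI < Nat.card P := by
      intro x hx
      obtain ⟨h1, h2, h3⟩ := hx
      obtain ⟨a, rfl⟩ := List.length_eq_one_iff.1 h1
      exact lt_of_lt_of_le (h3 a (by simp)) hN
    refine ⟨fun x hx => (g ⟨x.headI, hlt x hx⟩ : LinearExtension P), ?_⟩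
    intro a y b h1 h2 h3 hle
    have hy : y = [] := by simpa using h1.1
    subst hy
    have h4 : (g ⟨b, hlt _ h2⟩ : LinearExtension P) ≤ g ⟨a, hlt _ h1⟩ :=
      (toLinearExtension (α := P)).monotone hle
    rw [g.le_iff_le] at h4
    have h5 : a < b := by simpa using h3.2.1
    exact absurd h5 (not_lt.2 h4)

theorem QPoset_finite (t : ℕ) (e : Fin t → ℕ) (m : ℕ) : Finite (QPoset t e m).1 := by
  induction m with
  | zero => show Finite ((j : Fin t) × Fin (e j - 1)); infer_instance
  | succ m ih =>
    letI := (QPoset t e m).2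
    show Finite (LowerSet (QPoset t e m).1)
    exact Finite.of_injective (fun s : LowerSet (QPoset t e m).1 => (s : Set (QPoset t e m).1))
      SetLike.coe_injective

theorem ELab_iter (N t : ℕ) (e : Fin t → ℕ) (n : ℕ) : ∀ m,
    @ELab N (n + 1) (QPoset t e m).1 (QPoset t e m).2 ↔
      N ≤ Nat.card (QPoset t e (m + n)).1 := by
  induction n with
  | zero =>
    intro m
    letI := (QPoset t e m).2
    haveI := QPoset_finite t e m
    exact ELab_one N _
  | succ n ih =>
    intro m
    letI := (QPoset t e m).2
    have h := ELab_step N n (QPoset t e m).1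
    have h2 := ih (m + 1)
    rw [show m + (n + 1) = m + 1 + n by ring]
    exact h.trans h2

theorem ELab_card (N t : ℕ) (e : Fin t → ℕ) (n : ℕ) :
    ELab N (n + 1) ((j : Fin t) × Fin (e j - 1)) ↔ N ≤ Nat.card (QPoset t e n).1 := by
  have := ELab_iter N t e n 0
  rw [Nat.zero_add] at this
  exact this

theorem sigma_level {t : ℕ} {e : Fin t → ℕ} (p q : (j : Fin t) × Fin (e j - 1))
    (h : p.1 = q.1) : p ≤ q ↔ p.2.1 ≤ q.2.1 := by
  obtain ⟨j, a⟩ := p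
  obtain ⟨j', b⟩ := q
  simp only at h
  subst h
  simp

/-- Window of a function. -/
def win (i : ℕ) (g : ℕ → ℕ) (r : ℕ) : List ℕ := (List.range i).map fun q => g (r + q)

theorem win_valid {N i r : ℕ} {g : ℕ → ℕ} (hg : StrictMono g) (h : ∀ q < i, g (r + q) < N) :
    VTup N i (win i g r) := by
  refine ⟨by simp [win], ?_, ?_⟩
  · rw [List.isChain_iff_pairwise, win, List.pairwise_map]
    exact List.pairwise_lt_range.imp fun hab => hg (by omega)
  · intro a ha
    simp only [win, List.mem_map, List.mem_range] at ha
    obtain ⟨q, hq, rfl⟩ := ha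
    exact h q hq

theorem win_cons (m : ℕ) (g : ℕ → ℕ) (r : ℕ) : win (m + 1) g r = g r :: win m g (r + 1) := by
  simp [win, List.range_succ_eq_map, Function.comp_def]
  intros; congr 1; omega

theorem win_snoc (m : ℕ) (g : ℕ → ℕ) (r : ℕ) : win (m + 1) g r = win m g r ++ [g (r + m)] := by
  simp [win, List.range_succ]

/-- No descending: levels strictly increase along windows. -/
theorem lower_aux {M m t : ℕ} {e : Fin t → ℕ}
    (φ : (x : List ℕ) → VTup M (m + 1) x → (j : Fin t) × Fin (e j - 1))
    (hφ : ∀ a y b (h1 : VTup M (m + 1) (a :: y))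
    (h2 : VTup M (m + 1) (y ++ [b])), VTup M (m + 1 + 1) (a :: (y ++ [b])) →
      ¬ φ (y ++ [b]) h2 ≤ φ (a :: y) h1)
    (g : ℕ → ℕ) (hg : StrictMono g) (j : Fin t) (he : 1 ≤ e j) (hb : g (e j - 1 + m) < M)
    (hc : ∀ r < e j, ∀ h, (φ (win (m + 1) g r) h).1 = j) : False := by
  have hv : ∀ r < e j, VTup M (m + 1) (win (m + 1) g r) := by
    intro r hr
    apply win_valid hg
    intro q hq
    exact lt_of_le_of_lt (hg.monotone (by omega)) hb
  have key : ∀ r, (hr : r < e j) → r ≤ (φ (win (m + 1) g r) (hv r hr)).2.1 := by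
    intro r
    induction r with
    | zero => intro _; exact Nat.zero_le _
    | succ r ih =>
      intro hr
      have hr' : r < e j := by omega
      have h1 := ih hr'
      have h3 : VTup M (m + 1 + 1) (win (m + 1 + 1) g r) := by
        apply win_valid hg
        intro q hq
        exact lt_of_le_of_lt (hg.monotone (by omega)) hb
      have h4 : ¬ φ (win (m + 1) g (r + 1)) (hv _ hr) ≤ φ (win (m + 1) g r) (hv _ hr') := by
        have e1 := win_cons m g r
        have e2 := win_snoc m g (r + 1)
        have e3 := win_cons (m + 1) g r
        rw [e2] at e3
        have h5 := hφ (g r) (win m g (r + 1)) (g (r + 1 + m)) (e1 ▸ hv r hr') (e2 ▸ hv _ hr)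
          (e3 ▸ h3)
        simpa only [e1, e2] using h5
      rw [sigma_level _ _ (by rw [hc _ hr, hc _ hr'])] at h4
      omega
  have h1 := key (e j - 1) (by omega)
  have h2 := (φ (win (m + 1) g (e j - 1)) (hv _ (by omega))).2.2
  have h3 := hc (e j - 1) (by omega) (hv _ (by omega))
  generalize φ (win (m + 1) g (e j - 1)) (hv _ (by omega)) = p at h1 h2 h3
  have h4 : e p.1 = e j := by rw [h3]
  omega

/-- The tight tuple associated with an edge. -/
def tupOf (d s i : ℕ) (A : Finset ℕ) : List ℕ :=
  (List.range i).map fun q => ((A.sort (· ≤ ·)).getD (s - 1 + q * d) 0 - s) / d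

theorem sort_image (f : ℕ → ℕ) (hf : StrictMono f) (a k : ℕ) :
    ((Finset.Icc (a + 1) (a + k)).image f).sort (· ≤ ·) = (List.range k).map fun u => f (a + 1 + u) := by
  have h1 : ((Finset.Icc (a + 1) (a + k)).image f)
      = ((List.range k).map fun u => f (a + 1 + u)).toFinset := by
    ext v
    simp only [Finset.mem_image, Finset.mem_Icc, List.mem_toFinset, List.mem_map, List.mem_range]
    constructor
    · rintro ⟨w, hw, rfl⟩
      exact ⟨w - (a + 1), by omega, by congr 1; omega⟩
    · rintro ⟨w, hw, rfl⟩
      exact ⟨a + 1 + w, by omega, rfl⟩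
  rw [h1]
  apply (List.toFinset_sort (· ≤ ·) ?_).2 ?_
  · exact List.nodup_range.map fun x y h => by simpa using hf.injective h
  · rw [List.pairwise_map]
    exact List.pairwise_lt_range.imp fun hab => (hf (by omega)).le

theorem lower_bound (d s m t M k l N' : ℕ) (e : Fin t → ℕ) (ht : 1 ≤ t) (hs : 1 ≤ s)
    (hsd : s ≤ d) (hk : k = m * d + s) (hld : k = l + d)
    (he : ∀ j, 1 ≤ e j) (hE : ELab M (m + 1) ((j : Fin t) × Fin (e j - 1)))
    (hN : N' < d * M + s) :
    ¬ ∀ c : Finset ℕ → Fin t, ∃ i, (coloredSubgraph k N' c i).Contains (loosePath k l (e i)) := by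
  classical
  obtain ⟨φ, hφ⟩ := hE
  intro H
  obtain ⟨j, f, hf, hfv, hfe⟩ := H fun A => if h : VTup M (m + 1) (tupOf d s (m + 1) A) then
    (φ _ h).1 else ⟨0, ht⟩
  have hkl : k - l = d := by omega
  simp only [loosePath, coloredSubgraph, hkl] at hfv hfe
  have hfge : ∀ v, v ≤ f v := fun v => hf.le_apply
  have hfd : ∀ v, f v + d ≤ f (v + d) := fun v => by
    have : ∀ n, f v + n ≤ f (v + n) := by
      intro n
      induction n with
      | zero => simp
      | succ n ih => have := hf (show v + n < v + (n + 1) by omega); omega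
    exact this d
  let g : ℕ → ℕ := fun p => (f (p * d + s) - s) / d
  have hg : StrictMono g := by
    apply strictMono_nat_of_lt_succ
    intro p
    have h1 := hfd (p * d + s)
    have h2 := hfge (p * d + s)
    have h3 : p * d + s + d = (p + 1) * d + s := by ring
    rw [h3] at h1
    have h4 : s ≤ p * d + s := by omega
    show (f (p * d + s) - s) / d < (f ((p + 1) * d + s) - s) / d
    have : (f (p * d + s) - s) / d + 1 = (f (p * d + s) - s + d) / d := by
      rw [Nat.add_div_right _ (by omega)]
    rw [Nat.lt_iff_add_one_le, this]
    exact Nat.div_le_div_right (by omega)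
  have htup : ∀ r, tupOf d s (m + 1) ((Finset.Icc (r * d + 1) (r * d + k)).image f)
      = win (m + 1) g r := by
    intro r
    unfold tupOf win
    rw [sort_image f hf]
    apply List.map_congr_left
    intro q hq
    rw [List.mem_range] at hq
    have hqm : q * d ≤ m * d := Nat.mul_le_mul_right _ (by omega)
    have hlt : s - 1 + q * d < k := by omega
    rw [List.getD_eq_getElem _ _ (by simpa using hlt)]
    simp only [List.getElem_map, List.getElem_range, g]
    have : r * d + 1 + (s - 1 + q * d) = (r + q) * d + s := by
      rw [add_mul]; omega
    rw [this]
  refine lower_aux φ hφ g hg j (he j) ?_ ?_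
  · have h1 : (e j - 1 + m) * d + s = e j * d + l := by
      obtain ⟨n, hn⟩ : ∃ n, e j = n + 1 := ⟨e j - 1, by have := he j; omega⟩
      rw [hn, Nat.add_sub_cancel, add_mul, add_mul]; omega
    have h2 := hfv (e j * d + l) (by
      rw [Finset.mem_Icc]
      have : d ≤ e j * d := Nat.le_mul_of_pos_left _ (he j)
      omega)
    rw [Finset.mem_Icc] at h2
    show (f ((e j - 1 + m) * d + s) - s) / d < M
    rw [h1, Nat.div_lt_iff_lt_mul (by omega), mul_comm M d]
    have := hfge (e j * d + l)
    omega
  · intro r hr h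
    have h1 := hfe _ (Finset.mem_image_of_mem _ (Finset.mem_range.2 hr))
    rw [Finset.mem_filter] at h1
    have h2 := h1.2
    simp only [htup] at h2
    rw [dif_pos h] at h2
    exact h2

/-- The edge associated with a tight tuple. -/
def edgeOf (d k : ℕ) (x : List ℕ) : Finset ℕ :=
  (Finset.range k).image fun u => x.getD (u / d) 0 * d + u % d + 1

theorem exists_fun {N m : ℕ} {w : List ℕ} (h : VTup N m w) :
    ∃ g : ℕ → ℕ, StrictMono g ∧ win m g 0 = w := by
  obtain ⟨h1, h2, h3⟩ := h
  rw [List.isChain_iff_pairwise, List.pairwise_iff_getElem] at h2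
  refine ⟨fun p => if h : p < w.length then w[p] else N + p, ?_, ?_⟩
  · intro p q hpq
    simp only
    split_ifs with hp hq hq
    · exact h2 p q hp hq hpq
    · have := h3 w[p] (List.getElem_mem hp)
      omega
    · omega
    · omega
  · apply List.ext_getElem
    · simp [win, h1]
    · intro n hn1 hn2
      simp [win, hn2]

theorem upper_embed (d s m t M k l : ℕ) (hs : 1 ≤ s)
    (hsd : s ≤ d) (hk : k = m * d + s) (hld : k = l + d)
    (c : Finset ℕ → Fin t) (j : Fin t) (n : ℕ) (g : ℕ → ℕ) (hg : StrictMono g)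
    (hb : g (n + m) ≤ M) (hc : ∀ r ≤ n, c (edgeOf d k (win (m + 1) g r)) = j) :
    (coloredSubgraph k (d * M + s) c j).Contains (loosePath k l (n + 1)) := by
  have hkl : k - l = d := by omega
  have hd : 0 < d := by omega
  let F : ℕ → ℕ := fun u => g (u / d) * d + u % d + 1
  have hF : StrictMono F := by
    apply strictMono_nat_of_lt_succ
    intro u
    simp only [F]
    have h1 := Nat.div_add_mod u d
    have h2 := Nat.div_add_mod (u + 1) d
    have h3 := Nat.mod_lt u hd
    have h5 : u / d ≤ (u + 1) / d := Nat.div_le_div_right (by omega)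
    rcases Nat.eq_or_lt_of_le h5 with h | h
    · rw [← h] at h2 ⊢
      omega
    · have h6 : g (u / d) + 1 ≤ g ((u + 1) / d) := hg h
      have h7 := Nat.mul_le_mul_right d h6
      rw [add_mul] at h7
      omega
  let f : ℕ → ℕ := fun v => if v = 0 then 0 else F (v - 1)
  have hf : StrictMono f := by
    intro a b hab
    simp only [f]
    have hb : b ≠ 0 := by omega
    rw [if_neg hb]
    split_ifs with ha
    · simp [F]
    · exact hF (by omega)
  have hfv : ∀ v ∈ Finset.Icc 1 ((n + 1) * d + l), f v ∈ Finset.Icc 1 (d * M + s) := by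
    intro v hv
    rw [Finset.mem_Icc] at hv ⊢
    constructor
    · have : v ≤ f v := hf.le_apply
      omega
    · have h1 : f v ≤ f ((n + 1) * d + l) := hf.monotone hv.2
      refine h1.trans ?_
      have h2 : (n + 1) * d + l = (s - 1) + (n + m) * d + 1 := by
        rw [add_mul, add_mul]; omega
      rw [h2]
      simp only [f, F]
      rw [if_neg (by omega), Nat.add_sub_cancel, Nat.add_mul_div_right _ _ hd,
        Nat.add_mul_mod_self_right, Nat.div_eq_of_lt (by omega), Nat.mod_eq_of_lt (by omega),
        Nat.zero_add, mul_comm d M]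
      have := Nat.mul_le_mul_right d hb
      omega
  have himg : ∀ r, (Finset.Icc (r * d + 1) (r * d + k)).image f
      = edgeOf d k (win (m + 1) g r) := by
    intro r
    have hval : ∀ u < k, (win (m + 1) g r).getD (u / d) 0 * d + u % d + 1 = f (r * d + 1 + u) := by
      intro u hu
      have hlt : u / d < m + 1 := by
        rw [Nat.div_lt_iff_lt_mul hd, add_mul]; omega
      rw [List.getD_eq_getElem _ _ (by simpa [win] using hlt)]
      simp only [win, List.getElem_map, List.getElem_range, f, F]
      rw [if_neg (by omega), show r * d + 1 + u - 1 = u + r * d by omega,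
        Nat.add_mul_div_right _ _ hd, Nat.add_mul_mod_self_right, add_comm r]
    ext v
    simp only [edgeOf, Finset.mem_image, Finset.mem_Icc, Finset.mem_range]
    constructor
    · rintro ⟨w, hw, rfl⟩
      refine ⟨w - (r * d + 1), by omega, ?_⟩
      rw [hval _ (by omega)]
      congr 1; omega
    · rintro ⟨u, hu, rfl⟩
      exact ⟨r * d + 1 + u, by omega, (hval u hu).symm⟩
  refine ⟨f, hf, ?_, ?_⟩
  · simpa only [loosePath, coloredSubgraph, hkl] using hfv
  · simp only [loosePath, coloredSubgraph, hkl]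
    intro A hA
    rw [Finset.mem_image] at hA
    obtain ⟨r, hr, rfl⟩ := hA
    rw [Finset.mem_range] at hr
    rw [Finset.mem_filter, Finset.mem_powersetCard]
    refine ⟨⟨?_, ?_⟩, ?_⟩
    · intro v hv
      rw [Finset.mem_image] at hv
      obtain ⟨w, hw, rfl⟩ := hv
      apply hfv
      rw [Finset.mem_Icc] at hw ⊢
      have h1 : r * d ≤ n * d := Nat.mul_le_mul_right _ (by omega)
      rw [add_mul]
      omega
    · rw [Finset.card_image_of_injective _ hf.injective, Nat.card_Icc]
      omega
    · rw [himg]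
      exact hc r (by omega)

/-- There is a monochromatic path with `n+1` edges ending at `x`. -/
def PathEnd (N i : ℕ) {t : ℕ} (C : List ℕ → Fin t) (j : Fin t) (x : List ℕ) (n : ℕ) : Prop :=
  ∃ w, VTup N (n + i) w ∧ w.drop n = x ∧ ∀ r ≤ n, C ((w.drop r).take i) = j

theorem PathEnd_zero {N i t : ℕ} {C : List ℕ → Fin t} {x : List ℕ} (h : VTup N i x) :
    PathEnd N i C (C x) x 0 := by
  refine ⟨x, by simpa using h, by simp, ?_⟩
  intro r hr
  obtain rfl : r = 0 := by omega
  rw [List.drop_zero, List.take_of_length_le h.1.le]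

theorem PathEnd_succ {N i t : ℕ} {C : List ℕ → Fin t} {j : Fin t} {a b : ℕ} {y : List ℕ} {n : ℕ}
    (hp : PathEnd N i C j (a :: y) n) (h : VTup N (i + 1) (a :: (y ++ [b])))
    (hc : C (y ++ [b]) = j) : PathEnd N i C j (y ++ [b]) (n + 1) := by
  obtain ⟨w, hw, hd, hC⟩ := hp
  have hlen : (y ++ [b]).length = i := h.right.1
  have hi : 1 ≤ i := by rw [← hlen]; simp
  have hdrop : (w ++ [b]).drop (n + 1) = y ++ [b] := by
    rw [List.drop_append_of_le_length (by rw [hw.1]; omega), ← List.drop_drop, hd]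
    simp
  refine ⟨w ++ [b], ⟨by rw [List.length_append, hw.1]; simp; omega, ?_, ?_⟩, hdrop, ?_⟩
  · have h1 : w.take n ++ (a :: y) = w := by rw [← hd, List.take_append_drop]
    rw [← h1]
    refine List.IsChain.append_overlap ?_ ?_ (by simp)
    · rw [h1]; exact hw.2.1
    · exact h.2.1
  · intro c hc
    rcases List.mem_append.1 hc with hc | hc
    · exact hw.2.2 c hc
    · exact h.2.2 c (by simp at hc ⊢; tauto)
  · intro r hr
    rcases Nat.lt_or_ge n r with hr' | hr'
    · obtain rfl : r = n + 1 := by omega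
      rw [hdrop, List.take_of_length_le hlen.le, hc]
    · rw [List.drop_append_of_le_length (by rw [hw.1]; omega),
        List.take_append_of_le_length (by rw [List.length_drop, hw.1]; omega)]
      exact hC r hr'

theorem upper_bound (d s m t M k l : ℕ) (e : Fin t → ℕ) (hs : 1 ≤ s)
    (hsd : s ≤ d) (hk : k = m * d + s) (hld : k = l + d)
    (he : ∀ j, 1 ≤ e j) (hE : ¬ ELab (M + 1) (m + 1) ((j : Fin t) × Fin (e j - 1)))
    (c : Finset ℕ → Fin t) :
    ∃ i, (coloredSubgraph k (d * M + s) c i).Contains (loosePath k l (e i)) := by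
  classical
  by_contra hno
  push Not at hno
  apply hE
  let C : List ℕ → Fin t := fun x => c (edgeOf d k x)
  have hnop : ∀ j x, ¬ PathEnd (M + 1) (m + 1) C j x (e j - 1) := by
    rintro j x ⟨w, hw, -, hC⟩
    obtain ⟨g, hg, hgw⟩ := exists_fun hw
    apply hno j
    have hej : e j - 1 + 1 = e j := by have := he j; omega
    have := upper_embed d s m t M k l hs hsd hk hld c j (e j - 1) g hg ?_ ?_
    · rwa [hej] at this
    · have h1 : g (e j - 1 + m) ∈ w := by
        rw [← hgw, win, List.mem_map]
        exact ⟨e j - 1 + m, by rw [List.mem_range]; omega, by simp⟩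
      have := hw.2.2 _ h1
      omega
    · intro r hr
      have h1 := hC r hr
      have h2 : (w.drop r).take (m + 1) = win (m + 1) g r := by
        rw [← hgw]
        apply List.ext_getElem
        · simp [win]; omega
        · intro n h1 h2
          simp [win]
      rw [h2] at h1
      exact h1
  let lev : List ℕ → ℕ := fun x =>
    Nat.findGreatest (PathEnd (M + 1) (m + 1) C (C x) x) (e (C x) - 1)
  have hlev : ∀ x, VTup (M + 1) (m + 1) x → PathEnd (M + 1) (m + 1) C (C x) x (lev x) := by
    intro x hx
    exact Nat.findGreatest_spec (P := PathEnd (M + 1) (m + 1) C (C x) x) (Nat.zero_le _)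
      (PathEnd_zero hx)
  have hlt : ∀ x, VTup (M + 1) (m + 1) x → lev x < e (C x) - 1 := by
    intro x hx
    refine lt_of_le_of_ne (Nat.findGreatest_le _) ?_
    intro h
    have := hlev x hx
    rw [h] at this
    exact hnop _ _ this
  refine ⟨fun x hx => ⟨C x, lev x, hlt x hx⟩, ?_⟩
  intro a y b h1 h2 h3 hle
  have hcol : C (y ++ [b]) = C (a :: y) := by
    rw [Sigma.le_def] at hle
    exact hle.1
  rw [sigma_level _ _ hcol] at hle
  have h4 := PathEnd_succ (hlev _ h1) h3 hcol
  have h5 : lev (a :: y) + 1 ≤ lev (y ++ [b]) := by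
    apply Nat.le_findGreatest
    · rw [hcol]
      exact hlt _ h1
    · rw [hcol]; exact h4
  simp only at hle
  omega

/-- For `k > ℓ ≥ 1`, positive integers `e_1, …, e_t`, and `i = i(k,ℓ)`
the intersection number (the unique `i ≥ 2` with `(i-2)/(i-1) < ℓ/k ≤ (i-1)/i`),
`OR(P_{e_1}^{k,ℓ}, …, P_{e_t}^{k,ℓ}) = (k-ℓ)·|Q_i(e_1,…,e_t)| + ℓ - (k-ℓ)(i-2)`.
(Here `Q_i = QPoset t e (i-1)`.) -/
theorem ordered_ramsey_loose_paths_poset (k l i t : ℕ) (e : Fin t → ℕ)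
    (ht : 1 ≤ t) (hl : 1 ≤ l) (hlk : l < k) (he : ∀ j, 1 ≤ e j)
    (hi2 : 2 ≤ i) (hi_lower : (i - 2) * k < (i - 1) * l) (hi_upper : i * l ≤ (i - 1) * k) :
    (ORnum k (fun j => loosePath k l (e j)) : ℤ) =
      ((k : ℤ) - l) * (Nat.card (QPoset t e (i - 1)).1 : ℤ)
        + l - ((k : ℤ) - l) * ((i : ℤ) - 2) := by
  obtain ⟨m, rfl⟩ : ∃ m, i = m + 2 := ⟨i - 2, by omega⟩
  obtain ⟨d, rfl⟩ : ∃ d, k = l + d := ⟨k - l, by omega⟩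
  have hd : 1 ≤ d := by omega
  simp only [Nat.add_sub_cancel, show m + 2 - 1 = m + 1 by omega] at hi_lower hi_upper ⊢
  have h1 : (m + 1) * d < l + d := by nlinarith
  have h2 : l + d ≤ (m + 2) * d := by nlinarith
  obtain ⟨s, hs⟩ : ∃ s, l + d = (m + 1) * d + s := ⟨l + d - (m + 1) * d, by omega⟩
  have hs1 : 1 ≤ s := by omega
  have hsd : s ≤ d := by nlinarith
  set M := Nat.card (QPoset t e (m + 1)).1 with hM
  have key : ORnum (l + d) (fun j => loosePath (l + d) l (e j)) = d * M + s := by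
    have hmem : ∀ c : Finset ℕ → Fin t, ∃ i, (coloredSubgraph (l + d) (d * M + s) c i).Contains
        (loosePath (l + d) l (e i)) := by
      apply upper_bound d s (m + 1) t M (l + d) l e hs1 hsd hs rfl he
      rw [ELab_card]
      omega
    apply le_antisymm
    · exact Nat.sInf_le hmem
    · by_contra hlt
      push Not at hlt
      refine lower_bound d s (m + 1) t M (l + d) l _ e ht hs1 hsd hs rfl he ?_ hlt
        (Nat.sInf_mem (s := {N | ∀ c : Finset ℕ → Fin t, ∃ i,
          (coloredSubgraph (l + d) N c i).Contains (loosePath (l + d) l (e i))}) ⟨_, hmem⟩)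
      rw [ELab_card]
  rw [key]
  have hs' : (l : ℤ) + d = (m + 1) * d + s := by exact_mod_cast hs
  push_cast
  linear_combination (-1 : ℤ) * hs'
end

section
/- Let p ≥ 2 and t ≥ 1, and let P be any ordered 2-uniform graph on p vertices whose underlying (unordered) graph is a path on p vertices. Then OR_t(P) ≤ 2^{((⌈lg p⌉+1)^{t−1}(⌈lg p⌉^2 − 1) + 1)/⌈lg p⌉}, where lg denotes the base-2 logarithm. -/
/-- `P` is an ordered 2-uniform graph on vertex set `{1, …, m}` whose underlying
(unordered) graph is a path on `m` vertices: there is a relabeling `v` of `{1, …, m}`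
so that the edges of `P` are exactly `{v j, v (j+1)}` for `j = 1, …, m-1`. -/
def IsOrderedPathGraph (P : OrderedHypergraph) (m : ℕ) : Prop :=
  P.n = m ∧ ∃ v : ℕ → ℕ, Set.BijOn v (Set.Icc 1 m) (Set.Icc 1 m) ∧
    P.edges = (Finset.Icc 1 (m - 1)).image fun j => {v j, v (j + 1)}

/-- The ordered path given by `v` embeds in `S` along the relation `R`. -/
def PathEmb (p : ℕ) (v : ℕ → ℕ) (R : ℕ → ℕ → Prop) (S : Finset ℕ) : Prop :=
  ∃ g : ℕ → ℕ, StrictMonoOn g (Set.Icc 1 p) ∧ (∀ u ∈ Set.Icc 1 p, g u ∈ S) ∧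
    ∀ j, 1 ≤ j → j + 1 ≤ p → R (g (v j)) (g (v (j + 1)))

lemma PathEmb.mono {p : ℕ} {v : ℕ → ℕ} {R : ℕ → ℕ → Prop} {S T : Finset ℕ} (h : S ⊆ T)
    (hS : PathEmb p v R S) : PathEmb p v R T := by
  obtain ⟨g, h1, h2, h3⟩ := hS
  exact ⟨g, h1, fun u hu => h (h2 u hu), h3⟩

lemma exists_enum (S : Finset ℕ) : ∃ e : ℕ → ℕ, StrictMonoOn e (Set.Iio S.card) ∧
    ∀ i < S.card, e i ∈ S := by
  refine ⟨fun i => if h : i < S.card then S.orderEmbOfFin rfl ⟨i, h⟩ else 0, ?_, ?_⟩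
  · intro a ha b hb hab
    simp only [Set.mem_Iio] at ha hb
    simp only [ha, hb, dif_pos]
    exact (S.orderEmbOfFin rfl).strictMono hab
  · intro i hi
    simp only [hi, dif_pos]
    exact S.orderEmbOfFin_mem rfl _

lemma exists_initial (p : ℕ) (S : Finset ℕ) (h : p ≤ S.card) :
    ∃ g : ℕ → ℕ, StrictMonoOn g (Set.Icc 1 p) ∧ ∀ u ∈ Set.Icc 1 p, g u ∈ S := by
  obtain ⟨e, he, hS⟩ := exists_enum S
  refine ⟨fun u => e (u - 1), ?_, ?_⟩
  · intro a ha b hb hab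
    simp only [Set.mem_Icc] at ha hb
    exact he (show a - 1 < S.card by omega) (show b - 1 < S.card by omega) (by omega)
  · intro u hu
    simp only [Set.mem_Icc] at hu
    exact hS _ (by omega)

lemma exists_blocks (p m : ℕ) (S : Finset ℕ) (h : p * m ≤ S.card) :
    ∃ B : ℕ → Finset ℕ, (∀ u ∈ Set.Icc 1 p, B u ⊆ S ∧ (B u).card = m) ∧
      ∀ u ∈ Set.Icc 1 p, ∀ w ∈ Set.Icc 1 p, u < w → ∀ x ∈ B u, ∀ y ∈ B w, x < y := by
  obtain ⟨e, he, hS⟩ := exists_enum S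
  have key : ∀ u ∈ Set.Icc 1 p, ∀ i < m, (u - 1) * m + i < S.card := by
    intro u hu i hi
    simp only [Set.mem_Icc] at hu
    obtain ⟨k, rfl⟩ : ∃ k, u = k + 1 := ⟨u - 1, by omega⟩
    have : (k + 1) * m ≤ p * m := Nat.mul_le_mul_right _ hu.2
    simp only [Nat.add_sub_cancel]
    nlinarith
  refine ⟨fun u => (Finset.range m).image fun i => e ((u - 1) * m + i), ?_, ?_⟩
  · intro u hu
    constructor
    · intro x hx
      simp only [Finset.mem_image, Finset.mem_range] at hx
      obtain ⟨i, hi, rfl⟩ := hx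
      exact hS _ (key u hu i hi)
    · rw [Finset.card_image_of_injOn, Finset.card_range]
      intro i hi j hj hij
      simp only [Finset.coe_range, Set.mem_Iio] at hi hj
      have := he.injOn (key u hu i hi) (key u hu j hj) hij
      omega
  · intro u hu w hw huw x hx y hy
    simp only [Finset.mem_image, Finset.mem_range] at hx hy
    obtain ⟨i, hi, rfl⟩ := hx
    obtain ⟨j, hj, rfl⟩ := hy
    apply he (key u hu i hi) (key w hw j hj)
    simp only [Set.mem_Icc] at hu hw
    have : (u - 1 + 1) * m ≤ (w - 1) * m := Nat.mul_le_mul_right _ (by omega)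
    nlinarith

/-- Either the path embeds or there are two large disjoint sets with no `R`-edges between. -/
lemma emb_or_pair (p m : ℕ) (hp : 1 ≤ p) (hm : 1 ≤ m) (v : ℕ → ℕ)
    (hv : Set.BijOn v (Set.Icc 1 p) (Set.Icc 1 p)) (R : ℕ → ℕ → Prop) (S : Finset ℕ)
    (h : p * (2 * m) ≤ S.card) :
    PathEmb p v R S ∨ ∃ A B : Finset ℕ, A ⊆ S ∧ B ⊆ S ∧ Disjoint A B ∧ m ≤ A.card ∧ m ≤ B.card ∧
      ∀ a ∈ A, ∀ b ∈ B, ¬ R a b := by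
  classical
  obtain ⟨B, hB, hlt⟩ := exists_blocks p (2 * m) S h
  by_cases hpair : ∃ A B : Finset ℕ, A ⊆ S ∧ B ⊆ S ∧ Disjoint A B ∧ m ≤ A.card ∧ m ≤ B.card ∧
      ∀ a ∈ A, ∀ b ∈ B, ¬ R a b
  · exact Or.inr hpair
  left
  have reach : ∀ j, 1 ≤ j → j ≤ p → ∃ D ⊆ B (v j), m ≤ D.card ∧ ∀ x ∈ D, ∃ f : ℕ → ℕ, f j = x ∧
      (∀ i, 1 ≤ i → i ≤ j → f i ∈ B (v i)) ∧ ∀ i, 1 ≤ i → i + 1 ≤ j → R (f i) (f (i + 1)) := by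
    intro j hj
    induction j, hj using Nat.le_induction with
    | base =>
      intro h1
      refine ⟨B (v 1), subset_rfl, ?_, ?_⟩
      · rw [(hB _ (hv.mapsTo ⟨le_rfl, h1⟩)).2]; omega
      · intro x hx
        refine ⟨fun _ => x, rfl, ?_, ?_⟩
        · intro i h1 h2
          obtain rfl : i = 1 := by omega
          exact hx
        · intro i h1 h2; omega
    | succ j hj ih =>
      intro hjp
      obtain ⟨D, hD, hDm, hDf⟩ := ih (by omega)
      have m1 : v j ∈ Set.Icc 1 p := hv.mapsTo ⟨hj, by omega⟩
      have m2 : v (j + 1) ∈ Set.Icc 1 p := hv.mapsTo ⟨by omega, hjp⟩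
      have hne : v j ≠ v (j + 1) := by
        intro he
        have := hv.injOn ⟨hj, by omega⟩ ⟨by omega, hjp⟩ he
        omega
      refine ⟨(B (v (j + 1))).filter (fun b => ∃ a ∈ D, R a b), Finset.filter_subset _ _, ?_, ?_⟩
      · by_contra hcard
        apply hpair
        refine ⟨D, (B (v (j + 1))).filter (fun b => ¬ ∃ a ∈ D, R a b),
          hD.trans (hB _ m1).1, (Finset.filter_subset _ _).trans (hB _ m2).1, ?_, hDm, ?_, ?_⟩
        · rw [Finset.disjoint_left]
          intro x hx hx'
          have h1 := hD hx
          have h2 := (Finset.mem_filter.1 hx').1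
          rcases lt_or_gt_of_ne hne with hl | hl
          · exact lt_irrefl _ (hlt _ m1 _ m2 hl x h1 x h2)
          · exact lt_irrefl _ (hlt _ m2 _ m1 hl x h2 x h1)
        · have := Finset.card_filter_add_card_filter_not (s := B (v (j + 1)))
            (fun b => ∃ a ∈ D, R a b)
          rw [(hB _ m2).2] at this
          omega
        · intro a ha b hb hab
          exact (Finset.mem_filter.1 hb).2 ⟨a, ha, hab⟩
      · intro x hx
        obtain ⟨hxB, a, ha, hax⟩ := Finset.mem_filter.1 hx
        obtain ⟨f, hfj, hfB, hfR⟩ := hDf a ha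
        refine ⟨fun i => if i = j + 1 then x else f i, by simp, ?_, ?_⟩
        · intro i h1 h2
          by_cases hi : i = j + 1
          · subst hi; simpa using hxB
          · simp only [hi, if_false]; exact hfB i h1 (by omega)
        · intro i h1 h2
          have hi : i ≠ j + 1 := by omega
          by_cases hi' : i = j
          · subst hi'; simpa [hfj] using hax
          · have : i + 1 ≠ j + 1 := by omega
            simp only [hi, this, if_false]
            exact hfR i h1 (by omega)
  obtain ⟨D, -, hDm, hDf⟩ := reach p hp le_rfl
  obtain ⟨x, hx⟩ : D.Nonempty := Finset.card_pos.1 (by omega)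
  obtain ⟨f, -, hfB, hfR⟩ := hDf x hx
  have hinv := hv.invOn_invFunOn
  have hmap : ∀ u ∈ Set.Icc 1 p, f (Function.invFunOn v (Set.Icc 1 p) u) ∈ B u := by
    intro u hu
    have h1 : Function.invFunOn v (Set.Icc 1 p) u ∈ Set.Icc 1 p :=
      Function.invFunOn_mem (hv.surjOn hu)
    have := hfB _ h1.1 h1.2
    rwa [hinv.2 hu] at this
  refine ⟨fun u => f (Function.invFunOn v (Set.Icc 1 p) u), ?_, ?_, ?_⟩
  · intro a ha b hb hab
    exact hlt a ha b hb hab _ (hmap a ha) _ (hmap b hb)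
  · intro u hu
    exact (hB u hu).1 (hmap u hu)
  · intro j h1 h2
    simp only
    rw [hinv.1 (show j ∈ Set.Icc 1 p from ⟨h1, by omega⟩),
      hinv.1 (show j + 1 ∈ Set.Icc 1 p from ⟨by omega, h2⟩)]
    exact hfR j h1 h2

/-- Path versus independent set of size `2 ^ s`. -/
lemma emb_or_indep (p L : ℕ) (hp : 2 ≤ p) (hL : p ≤ 2 ^ L) (v : ℕ → ℕ)
    (hv : Set.BijOn v (Set.Icc 1 p) (Set.Icc 1 p)) (R : ℕ → ℕ → Prop)
    (hR : ∀ a b, R a b → R b a) (s : ℕ) (hs : 1 ≤ s) :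
    ∀ S : Finset ℕ, 2 ^ ((L + 1) * s - 1) ≤ S.card →
    PathEmb p v R S ∨ ∃ T ⊆ S, T.card = 2 ^ s ∧ ∀ a ∈ T, ∀ b ∈ T, a ≠ b → ¬ R a b := by
  induction s, hs using Nat.le_induction with
  | base =>
    intro S hS
    simp only [mul_one, Nat.add_sub_cancel] at hS
    obtain ⟨g, hg, hgS⟩ := exists_initial p S (hL.trans hS)
    by_cases hall : ∀ j, 1 ≤ j → j + 1 ≤ p → R (g (v j)) (g (v (j + 1)))
    · exact Or.inl ⟨g, hg, hgS, hall⟩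
    · right
      push Not at hall
      obtain ⟨j, h1, h2, hn⟩ := hall
      have m0 : j ∈ Set.Icc 1 p := ⟨h1, by omega⟩
      have m0' : j + 1 ∈ Set.Icc 1 p := ⟨by omega, h2⟩
      have m1 := hv.mapsTo m0
      have m2 := hv.mapsTo m0'
      have hne : g (v j) ≠ g (v (j + 1)) := by
        intro he
        have := hv.injOn m0 m0' (hg.injOn m1 m2 he)
        omega
      refine ⟨{g (v j), g (v (j + 1))}, ?_, ?_, ?_⟩
      · intro x hx
        simp only [Finset.mem_insert, Finset.mem_singleton] at hx
        rcases hx with rfl | rfl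
        · exact hgS _ m1
        · exact hgS _ m2
      · rw [Finset.card_pair hne]; rfl
      · intro a ha b hb hab
        simp only [Finset.mem_insert, Finset.mem_singleton] at ha hb
        rcases ha with rfl | rfl <;> rcases hb with rfl | rfl
        · exact absurd rfl hab
        · exact hn
        · exact fun h => hn (hR _ _ h)
        · exact absurd rfl hab
  | succ s hs ih =>
    intro S hS
    have hpos : 1 ≤ (L + 1) * s := Nat.mul_pos (by omega) hs
    have hexp : (L + 1) * (s + 1) - 1 = L + 1 + ((L + 1) * s - 1) := by
      rw [mul_add, mul_one]; omega
    rw [hexp, pow_add, pow_add, pow_one] at hS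
    set m := 2 ^ ((L + 1) * s - 1) with hm
    have hm1 : 1 ≤ m := Nat.one_le_two_pow
    have hle : p * (2 * m) ≤ S.card := by
      refine le_trans ?_ hS
      rw [mul_assoc]
      exact Nat.mul_le_mul_right _ hL
    rcases emb_or_pair p m (by omega) hm1 v hv R S hle with h | ⟨A, B, hA, hB, hd, hAm, hBm, hn⟩
    · exact Or.inl h
    rcases ih A hAm with h | ⟨T, hT, hTc, hTn⟩
    · exact Or.inl (h.mono hA)
    rcases ih B hBm with h | ⟨U, hU, hUc, hUn⟩
    · exact Or.inl (h.mono hB)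
    right
    refine ⟨T ∪ U, Finset.union_subset (hT.trans hA) (hU.trans hB), ?_, ?_⟩
    · rw [Finset.card_union_of_disjoint (Finset.disjoint_of_subset_left hT
        (Finset.disjoint_of_subset_right hU hd)), hTc, hUc, pow_succ]
      omega
    · intro a ha b hb hab
      rcases Finset.mem_union.1 ha with ha | ha <;> rcases Finset.mem_union.1 hb with hb | hb
      · exact hTn a ha b hb hab
      · exact hn a (hT ha) b (hU hb)
      · exact fun h => hn b (hT hb) a (hU ha) (hR _ _ h)
      · exact hUn a ha b hb hab

/-- The exponent of the bound for `k + 1` colors. -/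
def expo (L : ℕ) : ℕ → ℕ
  | 0 => L
  | k + 1 => (L + 1) * expo L k - 1

lemma expo_pos (L : ℕ) (hL : 1 ≤ L) (k : ℕ) : 1 ≤ expo L k := by
  induction k with
  | zero => exact hL
  | succ k ih =>
    have : 2 * 1 ≤ (L + 1) * expo L k := Nat.mul_le_mul (by omega) ih
    simp only [expo]; omega

lemma expo_eq (L : ℕ) (hL : 1 ≤ L) (k : ℕ) :
    (expo L k : ℝ) = (((L : ℝ) + 1) ^ k * ((L : ℝ) ^ 2 - 1) + 1) / L := by
  have hL0 : (L : ℝ) ≠ 0 := by positivity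
  induction k with
  | zero => simp only [expo]; field_simp; ring
  | succ k ih =>
    have h1 : 1 ≤ (L + 1) * expo L k := Nat.mul_pos (by omega) (expo_pos L hL k)
    simp only [expo]
    rw [Nat.cast_sub h1]
    push_cast
    rw [ih]
    field_simp
    ring

lemma multicolor (p L : ℕ) (hp : 2 ≤ p) (hL1 : 1 ≤ L) (hL : p ≤ 2 ^ L) (v : ℕ → ℕ)
    (hv : Set.BijOn v (Set.Icc 1 p) (Set.Icc 1 p)) (c : Finset ℕ → ℕ) (k : ℕ) :
    ∀ S : Finset ℕ, 2 ^ expo L k ≤ S.card →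
      (∀ a ∈ S, ∀ b ∈ S, a ≠ b → c {a, b} < k + 1) →
      ∃ i < k + 1, PathEmb p v (fun a b => c {a, b} = i) S := by
  induction k with
  | zero =>
    intro S hS hc
    obtain ⟨g, hg, hgS⟩ := exists_initial p S (hL.trans hS)
    refine ⟨0, by omega, g, hg, hgS, ?_⟩
    intro j h1 h2
    have m0 : j ∈ Set.Icc 1 p := ⟨h1, by omega⟩
    have m0' : j + 1 ∈ Set.Icc 1 p := ⟨by omega, h2⟩
    have m1 := hv.mapsTo m0
    have m2 := hv.mapsTo m0'
    have hne : g (v j) ≠ g (v (j + 1)) := by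
      intro he
      have := hv.injOn m0 m0' (hg.injOn m1 m2 he)
      omega
    have := hc _ (hgS _ m1) _ (hgS _ m2) hne
    omega
  | succ k ih =>
    intro S hS hc
    rcases emb_or_indep p L hp hL v hv (fun a b => c {a, b} = k + 1)
      (fun a b h => by rw [Finset.pair_comm]; exact h) (expo L k) (expo_pos L hL1 k) S hS with
      h | ⟨T, hT, hTc, hTn⟩
    · exact ⟨k + 1, by omega, h⟩
    · obtain ⟨i, hi, h⟩ := ih T hTc.ge (fun a ha b hb hab => by
        have h1 := hc a (hT ha) b (hT hb) hab
        have h2 := hTn a ha b hb hab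
        omega)
      exact ⟨i, by omega, h.mono hT⟩

/-- For `p ≥ 2`, `t ≥ 1`, and `P` any ordered 2-uniform path on `p`
vertices, `OR_t(P) ≤ 2^{((⌈lg p⌉+1)^{t-1}(⌈lg p⌉² - 1) + 1)/⌈lg p⌉}`, where
`⌈lg p⌉ = Nat.clog 2 p` is the ceiling of the base-2 logarithm of `p`. -/
theorem ordered_ramsey_arbitrary_path (p t : ℕ) (hp : 2 ≤ p) (ht : 1 ≤ t)
    (P : OrderedHypergraph) (hP : IsOrderedPathGraph P p) :
    (ORnum 2 (fun _ : Fin t => P) : ℝ) ≤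
      (2 : ℝ) ^ ((((Nat.clog 2 p : ℝ) + 1) ^ (t - 1) * ((Nat.clog 2 p : ℝ) ^ 2 - 1) + 1)
        / (Nat.clog 2 p : ℝ)) := by
  obtain ⟨hn, v, hv, hE⟩ := hP
  obtain ⟨k, rfl⟩ : ∃ k, t = k + 1 := ⟨t - 1, by omega⟩
  have hL1 : 1 ≤ Nat.clog 2 p := Nat.clog_pos (by omega) hp
  have hL : p ≤ 2 ^ Nat.clog 2 p := Nat.le_pow_clog (by omega) p
  rw [Nat.add_sub_cancel, ← expo_eq _ hL1, Real.rpow_natCast]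
  suffices h : ORnum 2 (fun _ : Fin (k + 1) => P) ≤ 2 ^ expo (Nat.clog 2 p) k by
    exact_mod_cast h
  apply Nat.sInf_le
  intro c
  set N := 2 ^ expo (Nat.clog 2 p) k with hN
  obtain ⟨i, hi, g, hg, hgS, hgR⟩ := multicolor p _ hp hL1 hL v hv (fun A => (c A : ℕ)) k
    (Finset.Icc 1 N) (by simp [hN]) (fun a _ b _ _ => (c {a, b}).2)
  refine ⟨⟨i, hi⟩, ?_⟩
  let f : ℕ → ℕ := fun u => if u = 0 then 0 else if u ≤ p then g u else g p + (u - p)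
  have hfg : ∀ u ∈ Set.Icc 1 p, f u = g u := by
    intro u hu
    have h1 := hu.1
    have h2 : u ≠ 0 := by omega
    simp only [f, h2, hu.2, if_false, if_true]
  refine ⟨f, ?_, ?_, ?_⟩
  · apply strictMono_nat_of_lt_succ
    intro u
    rcases Nat.eq_zero_or_pos u with rfl | hu
    · have h1 : (1 : ℕ) ∈ Set.Icc 1 p := ⟨le_rfl, by omega⟩
      rw [zero_add, hfg 1 h1]
      have := (Finset.mem_Icc.1 (hgS 1 h1)).1
      simp only [f, if_true]; omega
    · rcases lt_trichotomy u p with h | h | h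
      · have h1 : u ∈ Set.Icc 1 p := ⟨hu, h.le⟩
        have h2 : u + 1 ∈ Set.Icc 1 p := ⟨by omega, h⟩
        rw [hfg _ h1, hfg _ h2]
        exact hg h1 h2 (by omega)
      · have h1 : u ∈ Set.Icc 1 p := ⟨hu, h.le⟩
        rw [hfg _ h1]
        have h3 : ¬ (u + 1 ≤ p) := by omega
        simp only [f, h3, if_false, Nat.succ_ne_zero]
        subst h
        omega
      · have h3 : ¬ (u + 1 ≤ p) := by omega
        have h4 : ¬ (u ≤ p) := by omega
        have h5 : u ≠ 0 := by omega
        simp only [f, h3, h4, h5, if_false, Nat.succ_ne_zero]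
        omega
  · intro u hu
    simp only [hn, Finset.mem_Icc] at hu
    rw [hfg u hu]
    exact hgS u hu
  · intro A hA
    rw [hE] at hA
    obtain ⟨j, hj, rfl⟩ := Finset.mem_image.1 hA
    rw [Finset.mem_Icc] at hj
    have m0 : j ∈ Set.Icc 1 p := ⟨hj.1, by omega⟩
    have m0' : j + 1 ∈ Set.Icc 1 p := ⟨by omega, by omega⟩
    have m1 := hv.mapsTo m0
    have m2 := hv.mapsTo m0'
    have hne : g (v j) ≠ g (v (j + 1)) := by
      intro he
      have := hv.injOn m0 m0' (hg.injOn m1 m2 he)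
      omega
    rw [Finset.image_insert, Finset.image_singleton, hfg _ m1, hfg _ m2]
    simp only [coloredSubgraph, Finset.mem_filter, Finset.mem_powersetCard]
    refine ⟨⟨?_, Finset.card_pair hne⟩, ?_⟩
    · intro x hx
      simp only [Finset.mem_insert, Finset.mem_singleton] at hx
      rcases hx with rfl | rfl
      · exact hgS _ m1
      · exact hgS _ m2
    · exact Fin.ext (hgR j hj.1 (by omega))
end
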